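/- Let d ≥ 2, let G be the monomial group of order d!·3^d described below, and let Q be a d×d unitary matrix satisfying Tr((Q^{⊗2}) P1 (Q^{⊗2})† · P1) = 2d/(d+1). Then the set G^Q · G = {Q g Q† h : g, h ∈ G} with the product weights is a unitary 2-design: for every d²×d² complex matrix M, (1/(d!·3^d)²) · Σ_{g ∈ G} Σ_{h ∈ G} ((Q g Q† h)^{⊗2}) M ((Q g Q† h)^{⊗2})† = ∫_{U(d)} U^{⊗2} M (U^{⊗2})† dμ_U(U). -/

import Mathlib

/-!
Write `A^{⊗2} = A ⊗ A`, `F` for the swap on `ℂ^d ⊗ ℂ^d`, and `twirl A` for the sum of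
`g^{⊗2} A (g^{⊗2})†` over the monomial group `G`.

Comparing entries, the matrices commuting with every `g^{⊗2}`, `g ∈ G`, are exactly the
combinations `x • 1 + y • F + z • P1` (`commutant_span`): the diagonal cubic phases force an entry
`((a,b),(c,e))` to vanish unless `{a,b} = {c,e}` as multisets, and permutations act transitively
on ordered pairs of distinct indices. In particular this holds for `twirl A`.

The identity and `F` are fixed by conjugation with `U^{⊗2}` for every unitary `U`, so twirling
first over `G` and then over `Q G Q†` can only leave their span through the term coming from
`P1`, that is, through `twirl (Q^{⊗2}† P1 Q^{⊗2})`. Pairing this matrix with `1`, `F` and `P1`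
under the trace gives a linear system for its three coefficients, and the value `2d/(d+1)` of
`Tr(Q^{⊗2} P1 Q^{⊗2}† P1)` is precisely the one for which the coefficient of `P1` is zero
(`twirl_conj_P1`). Hence the sum over `G^Q · G` equals `a • 1 + b • F` for some `a`, `b`
(`sum_product_span`).

No formula for the Haar integral is needed. By right invariance of Haar measure
(`integral_tsq_conj_mul`) the Haar twirl of each summand `V^{⊗2} M (V^{⊗2})†` is the Haar twirl of
`M`, so the Haar twirl of the whole sum is `(d!·3^d)²` times that of `M`. On the other hand the
Haar twirl fixes `a • 1 + b • F`, so it returns the sum itself.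
-/

open Matrix MeasureTheory
open scoped Kronecker Real

/-- `ζ = exp(2πi/3)`, the principal cube root of unity. -/
noncomputable def zeta : ℂ := Complex.exp (2 * π * Complex.I / 3)

/-- The monomial matrix determined by a permutation `σ` and phases `α`:
`g i k = ζ^{α k}` if `i = σ k` and `0` otherwise.  As `(σ, α)` ranges over
`S_d × (ℤ/3ℤ)^d`, these are exactly the `d!·3^d` elements of the image of the
natural representation of `G(3,1,d)`. -/
noncomputable def gmat {d : ℕ} (σ : Equiv.Perm (Fin d)) (α : Fin d → ZMod 3) :
    Matrix (Fin d) (Fin d) ℂ :=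
  fun i k => if i = σ k then zeta ^ (α k).val else 0

/-- The orthogonal projection onto the span of `{e_j ⊗ e_j}` in `ℂ^d ⊗ ℂ^d`. -/
def P1 (d : ℕ) : Matrix (Fin d × Fin d) (Fin d × Fin d) ℂ :=
  fun p q => if p.1 = p.2 ∧ q.1 = q.2 ∧ p.1 = q.1 then 1 else 0

noncomputable instance (d : ℕ) : MeasurableSpace (Matrix.unitaryGroup (Fin d) ℂ) :=
  borel _

/-! ### Tensor squares, the swap and `P1` -/

/-- The tensor square `A ⊗ A`. -/
def tsq {d : ℕ} (A : Matrix (Fin d) (Fin d) ℂ) : Matrix (Fin d × Fin d) (Fin d × Fin d) ℂ :=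
  A ⊗ₖ A

/-- The swap operator `u ⊗ v ↦ v ⊗ u` on `ℂ^d ⊗ ℂ^d`. -/
def swapMat (d : ℕ) : Matrix (Fin d × Fin d) (Fin d × Fin d) ℂ :=
  fun p q => if p.1 = q.2 ∧ p.2 = q.1 then 1 else 0

/-- The unnormalised twirl `∑_{g ∈ G} g^{⊗2} A (g^{⊗2})†` over the monomial group, the group
being parametrised by pairs (permutation, phases). -/
noncomputable def twirl {d : ℕ} (A : Matrix (Fin d × Fin d) (Fin d × Fin d) ℂ) :
    Matrix (Fin d × Fin d) (Fin d × Fin d) ℂ :=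
  ∑ x : Equiv.Perm (Fin d) × (Fin d → ZMod 3),
    tsq (gmat x.1 x.2) * A * (tsq (gmat x.1 x.2))ᴴ

lemma tsq_mul {d : ℕ} (A B : Matrix (Fin d) (Fin d) ℂ) : tsq (A * B) = tsq A * tsq B :=
  Matrix.mul_kronecker_mul A B A B

lemma tsq_one {d : ℕ} : tsq (1 : Matrix (Fin d) (Fin d) ℂ) = 1 :=
  Matrix.one_kronecker_one

lemma tsq_conjTranspose {d : ℕ} (A : Matrix (Fin d) (Fin d) ℂ) : (tsq A)ᴴ = tsq Aᴴ :=
  Matrix.conjTranspose_kronecker A A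

lemma swapMat_mul_apply {d : ℕ} (A : Matrix (Fin d × Fin d) (Fin d × Fin d) ℂ)
    (p q : Fin d × Fin d) : (swapMat d * A) p q = A (p.2, p.1) q := by
  rw [Matrix.mul_apply, Finset.sum_eq_single (p.2, p.1)]
  · simp [swapMat]
  · rintro ⟨a, b⟩ - h
    have : ¬ (p.1 = b ∧ p.2 = a) := fun ⟨h1, h2⟩ => h (by rw [h1, h2])
    simp [swapMat, this]
  · simp

lemma mul_swapMat_apply {d : ℕ} (A : Matrix (Fin d × Fin d) (Fin d × Fin d) ℂ)
    (p q : Fin d × Fin d) : (A * swapMat d) p q = A p (q.2, q.1) := by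
  rw [Matrix.mul_apply, Finset.sum_eq_single (q.2, q.1)]
  · simp [swapMat]
  · rintro ⟨a, b⟩ - h
    have : ¬ (a = q.2 ∧ b = q.1) := fun ⟨h1, h2⟩ => h (by rw [h1, h2])
    simp [swapMat, this]
  · simp

lemma tsq_mul_swapMat {d : ℕ} (A : Matrix (Fin d) (Fin d) ℂ) :
    tsq A * swapMat d = swapMat d * tsq A := by
  ext p q
  rw [mul_swapMat_apply, swapMat_mul_apply]
  simp [tsq, Matrix.kroneckerMap_apply, mul_comm]

lemma swapMat_mul_self (d : ℕ) : swapMat d * swapMat d = 1 := by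
  ext ⟨a, b⟩ ⟨c, e⟩
  rw [swapMat_mul_apply]
  simp [swapMat, Matrix.one_apply, and_comm]

lemma P1_mul_swapMat (d : ℕ) : P1 d * swapMat d = P1 d := by
  ext ⟨a, b⟩ ⟨c, e⟩
  rw [mul_swapMat_apply]
  simp only [P1]
  grind

lemma swapMat_mul_P1 (d : ℕ) : swapMat d * P1 d = P1 d := by
  ext ⟨a, b⟩ ⟨c, e⟩
  rw [swapMat_mul_apply]
  simp only [P1]
  grind

lemma P1_eq_diagonal (d : ℕ) :
    P1 d = Matrix.diagonal (fun p : Fin d × Fin d => if p.1 = p.2 then (1 : ℂ) else 0) := by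
  ext ⟨a, b⟩ ⟨c, e⟩
  simp only [P1, Matrix.diagonal_apply, Prod.mk.injEq]
  grind

lemma P1_mul_self (d : ℕ) : P1 d * P1 d = P1 d := by
  rw [P1_eq_diagonal, Matrix.diagonal_mul_diagonal]
  congr 1
  ext p
  split_ifs <;> simp

lemma trace_P1 (d : ℕ) : (P1 d).trace = d := by
  rw [P1_eq_diagonal, Matrix.trace_diagonal, Fintype.sum_prod_type]
  simp

lemma trace_swapMat (d : ℕ) : (swapMat d).trace = d := by
  simp only [Matrix.trace, Matrix.diag, swapMat, Fintype.sum_prod_type]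
  have : ∀ a b : Fin d, (a = b ∧ b = a) ↔ a = b := fun a b => ⟨And.left, fun h => ⟨h, h.symm⟩⟩
  simp [this]

/-! ### The cube root of unity -/

lemma zeta_primitive : IsPrimitiveRoot zeta 3 := by
  have := Complex.isPrimitiveRoot_exp 3 (by norm_num)
  simpa [zeta] using this

lemma zeta_pow_val_add (a b : ZMod 3) :
    zeta ^ (a + b).val = zeta ^ a.val * zeta ^ b.val := by
  rw [ZMod.val_add, ← pow_add, ← pow_eq_pow_mod _ zeta_primitive.pow_eq_one]

lemma star_zeta_pow_mul (n : ℕ) : star (zeta ^ n) * zeta ^ n = 1 := by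
  have h : ‖zeta ^ n‖ = 1 := by
    rw [norm_pow, zeta_primitive.norm'_eq_one (by norm_num), one_pow]
  have := Complex.conj_mul' (zeta ^ n)
  rw [h] at this
  simpa using this

/-! ### The monomial group and its commutant -/

section Monomial

variable {d : ℕ}

lemma gmat_mul (τ σ : Equiv.Perm (Fin d)) (β α : Fin d → ZMod 3) :
    gmat τ β * gmat σ α = gmat (τ * σ) (fun k => β (σ k) + α k) := by
  ext i k
  rw [Matrix.mul_apply, Finset.sum_eq_single (σ k)]
  · simp [gmat, zeta_pow_val_add]
  · intro j _ hj
    simp [gmat, hj]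
  · simp

lemma gmat_conjTranspose_mul (σ : Equiv.Perm (Fin d)) (α : Fin d → ZMod 3) :
    (gmat σ α)ᴴ * gmat σ α = 1 := by
  ext i k
  rw [Matrix.mul_apply, Finset.sum_eq_single (σ k)]
  · by_cases h : k = i
    · subst h
      simpa [gmat] using star_zeta_pow_mul (α k).val
    · simp [gmat, h, Ne.symm h]
  · intro j _ hj
    simp [gmat, hj]
  · simp

lemma gmat_mem (σ : Equiv.Perm (Fin d)) (α : Fin d → ZMod 3) :
    gmat σ α ∈ Matrix.unitaryGroup (Fin d) ℂ :=
  Matrix.mem_unitaryGroup_iff'.2 (gmat_conjTranspose_mul σ α)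

lemma tsq_conjTranspose_mul {U : Matrix (Fin d) (Fin d) ℂ}
    (hU : U ∈ Matrix.unitaryGroup (Fin d) ℂ) : (tsq U)ᴴ * tsq U = 1 := by
  have : Uᴴ * U = 1 := Matrix.mem_unitaryGroup_iff'.1 hU
  rw [tsq_conjTranspose, ← tsq_mul, this, tsq_one]

lemma tsq_mul_conjTranspose {U : Matrix (Fin d) (Fin d) ℂ}
    (hU : U ∈ Matrix.unitaryGroup (Fin d) ℂ) : tsq U * (tsq U)ᴴ = 1 := by
  have : U * Uᴴ = 1 := Matrix.mem_unitaryGroup_iff.1 hU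
  rw [tsq_conjTranspose, ← tsq_mul, this, tsq_one]

/-- The span of `1` and the swap is fixed by every unitary conjugation `U^{⊗2} · (U^{⊗2})†`. -/
lemma tsq_conj_one_swap {U : Matrix (Fin d) (Fin d) ℂ}
    (hU : U ∈ Matrix.unitaryGroup (Fin d) ℂ) (a b : ℂ) :
    tsq U * (a • 1 + b • swapMat d) * (tsq U)ᴴ = a • 1 + b • swapMat d := by
  rw [mul_add, add_mul, mul_smul_comm, mul_smul_comm, tsq_mul_swapMat, smul_mul_assoc,
    smul_mul_assoc, mul_assoc (swapMat d), mul_one, tsq_mul_conjTranspose hU, mul_one]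

lemma tsq_gmat_mul_apply (σ : Equiv.Perm (Fin d)) (α : Fin d → ZMod 3)
    (A : Matrix (Fin d × Fin d) (Fin d × Fin d) ℂ) (a b : Fin d) (q : Fin d × Fin d) :
    (tsq (gmat σ α) * A) (σ a, σ b) q
      = zeta ^ (α a).val * zeta ^ (α b).val * A (a, b) q := by
  rw [Matrix.mul_apply, Finset.sum_eq_single (a, b)]
  · simp [tsq, gmat, Matrix.kroneckerMap_apply]
  · rintro ⟨a', b'⟩ - h
    have : ¬ (a = a' ∧ b = b') := fun ⟨h1, h2⟩ => h (by rw [h1, h2])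
    by_cases h1 : a = a' <;> by_cases h2 : b = b' <;>
      simp_all [tsq, gmat, Matrix.kroneckerMap_apply]
  · simp

lemma mul_tsq_gmat_apply (σ : Equiv.Perm (Fin d)) (α : Fin d → ZMod 3)
    (A : Matrix (Fin d × Fin d) (Fin d × Fin d) ℂ) (c e : Fin d) (p : Fin d × Fin d) :
    (A * tsq (gmat σ α)) p (c, e)
      = A p (σ c, σ e) * (zeta ^ (α c).val * zeta ^ (α e).val) := by
  rw [Matrix.mul_apply, Finset.sum_eq_single (σ c, σ e)]
  · simp [tsq, gmat, Matrix.kroneckerMap_apply]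
  · rintro ⟨a', b'⟩ - h
    have : ¬ (a' = σ c ∧ b' = σ e) := fun ⟨h1, h2⟩ => h (by rw [h1, h2])
    by_cases h1 : a' = σ c <;> by_cases h2 : b' = σ e <;>
      simp_all [tsq, gmat, Matrix.kroneckerMap_apply]
  · simp

/-- `e_j ⊗ e_j` is sent to a multiple of `e_{σ j} ⊗ e_{σ j}`, so `P1` lies in the commutant. -/
lemma tsq_gmat_mul_P1 (σ : Equiv.Perm (Fin d)) (α : Fin d → ZMod 3) :
    tsq (gmat σ α) * P1 d = P1 d * tsq (gmat σ α) := by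
  ext ⟨i, j⟩ ⟨c, e⟩
  obtain ⟨a, rfl⟩ := σ.surjective i
  obtain ⟨b, rfl⟩ := σ.surjective j
  rw [tsq_gmat_mul_apply, mul_tsq_gmat_apply]
  simp only [P1, EmbeddingLike.apply_eq_iff_eq]
  split_ifs with h
  · obtain ⟨rfl, rfl, rfl⟩ := h
    simp
  · simp

/-- Left translation by a group element permutes the summands of the twirl. -/
lemma tsq_gmat_mul_twirl (τ : Equiv.Perm (Fin d)) (β : Fin d → ZMod 3)
    (A : Matrix (Fin d × Fin d) (Fin d × Fin d) ℂ) :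
    tsq (gmat τ β) * twirl A = twirl A * tsq (gmat τ β) := by
  have key : tsq (gmat τ β) * twirl A * (tsq (gmat τ β))ᴴ = twirl A := by
    let φ : Equiv.Perm (Fin d) × (Fin d → ZMod 3) → Equiv.Perm (Fin d) × (Fin d → ZMod 3) :=
      fun x => (τ * x.1, fun k => β (x.1 k) + x.2 k)
    have hφ : Function.Bijective φ := by
      rw [← Finite.injective_iff_bijective]
      rintro ⟨σ, α⟩ ⟨σ', α'⟩ h
      simp only [φ, Prod.mk.injEq, mul_right_inj] at h
      obtain ⟨rfl, h⟩ := h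
      refine Prod.ext rfl (funext fun k => ?_)
      simpa using congrFun h k
    conv_rhs => rw [twirl, ← hφ.sum_comp]
    rw [twirl, Finset.mul_sum, Finset.sum_mul]
    refine Finset.sum_congr rfl fun x _ => ?_
    simp only [φ, ← gmat_mul, tsq_mul, Matrix.conjTranspose_mul, mul_assoc]
  calc tsq (gmat τ β) * twirl A
      = tsq (gmat τ β) * twirl A * (tsq (gmat τ β))ᴴ * tsq (gmat τ β) := by
        rw [mul_assoc _ _ (tsq (gmat τ β)), tsq_conjTranspose_mul (gmat_mem τ β), mul_one]
    _ = _ := by rw [key]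

/-- The diagonal phases in `G` force an element of the commutant to be supported on pairs of
indices with equal underlying multisets. Exponents of `ζ` are at most `2`, so no wrap-around
modulo `3` can occur. -/
lemma commutant_support (A : Matrix (Fin d × Fin d) (Fin d × Fin d) ℂ)
    (hA : ∀ σ α, tsq (gmat σ α) * A = A * tsq (gmat σ α)) {a b c e : Fin d}
    (h : A (a, b) (c, e) ≠ 0) : (a = c ∧ b = e) ∨ (a = e ∧ b = c) := by
  have count : ∀ i : Fin d, (if a = i then 1 else 0) + (if b = i then 1 else 0)
      = (if c = i then 1 else 0) + (if e = i then 1 else 0 : ℕ) := by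
    intro i
    have h1 := congrFun (congrFun (hA 1 (fun k => if k = i then 1 else 0)) (a, b)) (c, e)
    have h2 := tsq_gmat_mul_apply 1 (fun k => if k = i then 1 else 0) A a b (c, e)
    have h3 := mul_tsq_gmat_apply 1 (fun k => if k = i then 1 else 0) A c e (a, b)
    have hv : ∀ k : Fin d, (if k = i then (1 : ZMod 3) else 0).val = if k = i then 1 else 0 := by
      intro k
      split_ifs <;> rfl
    simp only [Equiv.Perm.coe_one, id_eq, hv] at h2 h3
    rw [h2, h3, mul_comm, ← pow_add, ← pow_add] at h1
    exact zeta_primitive.pow_inj (by split_ifs <;> norm_num) (by split_ifs <;> norm_num)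
      (mul_left_cancel₀ h h1)
  have ha := count a
  have hb := count b
  grind

/-- The commutant of `G^{⊗2}` is spanned by the identity, the swap and `P1`. -/
lemma commutant_span (hd : 2 ≤ d) (A : Matrix (Fin d × Fin d) (Fin d × Fin d) ℂ)
    (hA : ∀ σ α, tsq (gmat σ α) * A = A * tsq (gmat σ α)) :
    ∃ x y z : ℂ, A = x • 1 + y • swapMat d + z • P1 d := by
  have perm : ∀ (σ : Equiv.Perm (Fin d)) (a b c e : Fin d),
      A (σ a, σ b) (σ c, σ e) = A (a, b) (c, e) := by
    intro σ a b c e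
    have h1 := congrFun (congrFun (hA σ 0) (σ a, σ b)) (c, e)
    rw [tsq_gmat_mul_apply, mul_tsq_gmat_apply] at h1
    simpa using h1.symm
  let i₀ : Fin d := ⟨0, by omega⟩
  let i₁ : Fin d := ⟨1, by omega⟩
  have hi : i₀ ≠ i₁ := by simp [i₀, i₁, Fin.ext_iff]
  have two : ∀ a b : Fin d, a ≠ b → ∃ σ : Equiv.Perm (Fin d), σ i₀ = a ∧ σ i₁ = b := by
    intro a b hab
    refine ⟨Equiv.swap i₀ a * Equiv.swap i₁ (Equiv.swap i₀ a b), ?_, ?_⟩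
    · have h1 : i₀ ≠ Equiv.swap i₀ a b := by
        intro h
        have := congrArg (Equiv.swap i₀ a) h
        simp at this
        exact hab this
      simp [Equiv.swap_apply_of_ne_of_ne hi h1]
    · simp
  refine ⟨A (i₀, i₁) (i₀, i₁), A (i₀, i₁) (i₁, i₀),
    A (i₀, i₀) (i₀, i₀) - A (i₀, i₁) (i₀, i₁) - A (i₀, i₁) (i₁, i₀), ?_⟩
  ext ⟨a, b⟩ ⟨c, e⟩
  simp only [Matrix.add_apply, Matrix.smul_apply, smul_eq_mul, Matrix.one_apply, swapMat, P1,
    Prod.mk.injEq]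
  by_cases hab : a = b
  · subst hab
    by_cases h : a = c ∧ a = e
    · obtain ⟨rfl, rfl⟩ := h
      have h2 := perm (Equiv.swap i₀ a) i₀ i₀ i₀ i₀
      simp only [Equiv.swap_apply_left] at h2
      rw [h2]
      simp
    · have h0 : A (a, a) (c, e) = 0 := by
        by_contra hne
        have := commutant_support A hA hne
        grind
      rw [h0]
      grind
  · obtain ⟨σ, rfl, rfl⟩ := two a b hab
    by_cases h : σ i₀ = c ∧ σ i₁ = e
    · obtain ⟨rfl, rfl⟩ := h
      rw [perm]
      simp [hi, hi.symm]
    · by_cases h' : σ i₀ = e ∧ σ i₁ = c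
      · obtain ⟨rfl, rfl⟩ := h'
        rw [perm]
        simp [hi, hi.symm]
      · have h0 : A (σ i₀, σ i₁) (c, e) = 0 := by
          by_contra hne
          have := commutant_support A hA hne
          grind
        rw [h0]
        simp [h, h', hi]

/-- The twirl is self-adjoint for the trace pairing and fixes the commutant up to `|G|`. -/
lemma trace_twirl_mul (A B : Matrix (Fin d × Fin d) (Fin d × Fin d) ℂ)
    (hB : ∀ σ α, tsq (gmat σ α) * B = B * tsq (gmat σ α)) :
    (twirl A * B).trace
      = Fintype.card (Equiv.Perm (Fin d) × (Fin d → ZMod 3)) * (A * B).trace := by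
  rw [twirl, Finset.sum_mul, Matrix.trace_sum]
  have : ∀ x : Equiv.Perm (Fin d) × (Fin d → ZMod 3),
      (tsq (gmat x.1 x.2) * A * (tsq (gmat x.1 x.2))ᴴ * B).trace = (A * B).trace := by
    intro x
    rw [mul_assoc, mul_assoc, Matrix.trace_mul_comm, mul_assoc, mul_assoc, ← hB,
      ← mul_assoc _ _ B, tsq_conjTranspose_mul (gmat_mem _ _), one_mul]
  simp [this]

/-! ### The product set -/

/-- The trace hypothesis makes the component of `Q† P1 Q` along `P1 - (2/(d+1)) Π_sym` vanish,
where `Π_sym` is the projection onto the symmetric subspace; what remains of the twirl lies in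
the span of the identity and the swap. -/
lemma twirl_conj_P1 (hd : 2 ≤ d) (Q : Matrix (Fin d) (Fin d) ℂ)
    (hQ : Q ∈ Matrix.unitaryGroup (Fin d) ℂ)
    (htr : ((Q ⊗ₖ Q) * P1 d * (Q ⊗ₖ Q)ᴴ * P1 d).trace = (2 * d / (d + 1) : ℂ)) :
    ∃ x y : ℂ, twirl ((tsq Q)ᴴ * P1 d * tsq Q) = x • 1 + y • swapMat d := by
  set N := (tsq Q)ᴴ * P1 d * tsq Q with hN
  set n : ℂ := (Fintype.card (Equiv.Perm (Fin d) × (Fin d → ZMod 3)) : ℂ) with hn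
  obtain ⟨x, y, z, h⟩ := commutant_span hd (twirl N) (fun σ α => tsq_gmat_mul_twirl σ α N)
  have t1 : (twirl N).trace = n * d := by
    have := trace_twirl_mul N 1 (fun σ α => by rw [mul_one, one_mul])
    rw [mul_one, mul_one] at this
    rw [this, hN, mul_assoc, Matrix.trace_mul_comm, mul_assoc, tsq_mul_conjTranspose hQ, mul_one,
      trace_P1]
  have t2 : (twirl N * swapMat d).trace = n * d := by
    rw [trace_twirl_mul N _ (fun σ α => tsq_mul_swapMat _), hN, mul_assoc, tsq_mul_swapMat,
      mul_assoc, ← mul_assoc (P1 d), P1_mul_swapMat, Matrix.trace_mul_comm, mul_assoc,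
      tsq_mul_conjTranspose hQ, mul_one, trace_P1]
  have t3 : (twirl N * P1 d).trace = n * (2 * d / (d + 1)) := by
    have hc := Matrix.trace_mul_comm ((tsq Q)ᴴ * P1 d) (tsq Q * P1 d)
    simp only [← mul_assoc] at hc
    rw [trace_twirl_mul N _ (fun σ α => tsq_gmat_mul_P1 _ _), ← htr, hN, hc]
    rfl
  rw [h] at t1 t2 t3
  simp only [add_mul, smul_mul_assoc, one_mul, swapMat_mul_self, P1_mul_swapMat, swapMat_mul_P1,
    P1_mul_self, Matrix.trace_add, Matrix.trace_smul, Matrix.trace_one, trace_swapMat, trace_P1,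
    smul_eq_mul, Fintype.card_prod, Fintype.card_fin, Nat.cast_mul] at t1 t2 t3
  have hd0 : (d : ℂ) ≠ 0 := by
    exact_mod_cast (by omega : d ≠ 0)
  have hd1 : (d : ℂ) - 1 ≠ 0 := by
    rw [sub_ne_zero]
    exact_mod_cast (by omega : d ≠ 1)
  have hd2 : (d : ℂ) + 1 ≠ 0 := by
    exact_mod_cast (by omega : d + 1 ≠ 0)
  have hz : z = 0 := by
    have e1 : x = y := by
      have : (d : ℂ) * (d - 1) * (x - y) = 0 := by linear_combination t1 - t2
      simpa [hd0, hd1, sub_eq_zero] using this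
    subst e1
    have e2 : x * (d + 1) + z = n := by
      apply mul_left_cancel₀ hd0
      linear_combination t1
    have e3 : (2 * x + z) * (d + 1) = 2 * n := by
      have : (2 * x + z) * d = n * (2 * d / (d + 1)) := by linear_combination t3
      apply mul_left_cancel₀ hd0
      field_simp at this
      linear_combination (d : ℂ) * this
    have : z * (d - 1) = 0 := by linear_combination e3 - 2 * e2
    simpa [hd1] using this
  exact ⟨x, y, by rw [h, hz, zero_smul, add_zero]⟩

/-- Averaging over `G` and then over `Q G Q†` leaves only the part in the span of the identity
and the swap. -/
lemma sum_product_span (hd : 2 ≤ d) (Q : Matrix (Fin d) (Fin d) ℂ)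
    (hQ : Q ∈ Matrix.unitaryGroup (Fin d) ℂ)
    (htr : ((Q ⊗ₖ Q) * P1 d * (Q ⊗ₖ Q)ᴴ * P1 d).trace = (2 * d / (d + 1) : ℂ))
    (M : Matrix (Fin d × Fin d) (Fin d × Fin d) ℂ) :
    ∃ a b : ℂ, ∑ x : Equiv.Perm (Fin d) × (Fin d → ZMod 3),
      ∑ y : Equiv.Perm (Fin d) × (Fin d → ZMod 3),
        tsq (Q * gmat x.1 x.2 * Qᴴ * gmat y.1 y.2) * M *
          (tsq (Q * gmat x.1 x.2 * Qᴴ * gmat y.1 y.2))ᴴ = a • 1 + b • swapMat d := by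
  obtain ⟨x', y', h'⟩ := twirl_conj_P1 hd Q hQ htr
  obtain ⟨x, y, z, h⟩ := commutant_span hd (twirl M) (fun σ α => tsq_gmat_mul_twirl σ α M)
  set n : ℂ := (Fintype.card (Equiv.Perm (Fin d) × (Fin d → ZMod 3)) : ℂ) with hn
  have hQ' : Qᴴ ∈ Matrix.unitaryGroup (Fin d) ℂ := Unitary.star_mem hQ
  refine ⟨n * x + z * x', n * y + z * y', ?_⟩
  have inner : ∀ g : Equiv.Perm (Fin d) × (Fin d → ZMod 3),
      ∑ k : Equiv.Perm (Fin d) × (Fin d → ZMod 3),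
        tsq (Q * gmat g.1 g.2 * Qᴴ * gmat k.1 k.2) * M *
          (tsq (Q * gmat g.1 g.2 * Qᴴ * gmat k.1 k.2))ᴴ
      = (x • 1 + y • swapMat d) + z • (tsq Q *
          (tsq (gmat g.1 g.2) * ((tsq Q)ᴴ * P1 d * tsq Q) * (tsq (gmat g.1 g.2))ᴴ)
            * (tsq Q)ᴴ) := by
    intro g
    have hV : Q * gmat g.1 g.2 * Qᴴ ∈ Matrix.unitaryGroup (Fin d) ℂ :=
      mul_mem (mul_mem hQ (gmat_mem _ _)) hQ'
    have e1 : ∑ k : Equiv.Perm (Fin d) × (Fin d → ZMod 3),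
        tsq (Q * gmat g.1 g.2 * Qᴴ * gmat k.1 k.2) * M *
          (tsq (Q * gmat g.1 g.2 * Qᴴ * gmat k.1 k.2))ᴴ
        = tsq (Q * gmat g.1 g.2 * Qᴴ) * twirl M * (tsq (Q * gmat g.1 g.2 * Qᴴ))ᴴ := by
      rw [twirl, Finset.mul_sum, Finset.sum_mul]
      refine Finset.sum_congr rfl fun k _ => ?_
      rw [tsq_mul _ (gmat k.1 k.2)]
      simp only [Matrix.conjTranspose_mul, mul_assoc]
    rw [e1, h, mul_add, add_mul, tsq_conj_one_swap hV, mul_smul_comm, smul_mul_assoc]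
    simp only [tsq_mul, tsq_conjTranspose, Matrix.conjTranspose_mul,
      Matrix.conjTranspose_conjTranspose, mul_assoc]
  simp only [inner]
  rw [Finset.sum_add_distrib, ← Finset.smul_sum, ← Finset.sum_mul, ← Finset.mul_sum]
  change _ + z • (tsq Q * twirl ((tsq Q)ᴴ * P1 d * tsq Q) * (tsq Q)ᴴ) = _
  rw [h', tsq_conj_one_swap hQ, Finset.sum_const, Finset.card_univ, ← Nat.cast_smul_eq_nsmul ℂ,
    ← hn]
  module

end Monomial

/-! ### The Haar twirl -/

section Haar

variable {d : ℕ}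

instance : BorelSpace (Matrix.unitaryGroup (Fin d) ℂ) := ⟨rfl⟩

instance : CompactSpace (Matrix.unitaryGroup (Fin d) ℂ) := by
  refine (isCompact_iff_compactSpace
    (s := (Matrix.unitaryGroup (Fin d) ℂ : Set (Matrix (Fin d) (Fin d) ℂ)))).1 ?_
  have hK : IsCompact (Set.univ.pi fun _ : Fin d => Set.univ.pi fun _ : Fin d =>
      Metric.closedBall (0 : ℂ) 1) :=
    isCompact_univ_pi fun _ => isCompact_univ_pi fun _ => isCompact_closedBall 0 1
  have hc : IsClosed {U : Matrix (Fin d) (Fin d) ℂ | U * star U = 1} :=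
    isClosed_eq (by fun_prop) continuous_const
  have hs : (Matrix.unitaryGroup (Fin d) ℂ : Set (Matrix (Fin d) (Fin d) ℂ))
      = {U : Matrix (Fin d) (Fin d) ℂ | U * star U = 1} := by
    ext U
    exact Matrix.mem_unitaryGroup_iff
  refine IsCompact.of_isClosed_subset hK (hs ▸ hc) fun U hU i _ j _ => ?_
  simpa using entry_norm_bound_of_unitary hU i j

lemma continuous_tsq_conj (M : Matrix (Fin d × Fin d) (Fin d × Fin d) ℂ) (p q : Fin d × Fin d) :
    Continuous fun U : Matrix.unitaryGroup (Fin d) ℂ =>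
      (tsq (U : Matrix (Fin d) (Fin d) ℂ) * M * (tsq (U : Matrix (Fin d) (Fin d) ℂ))ᴴ) p q := by
  have h : Continuous fun U : Matrix.unitaryGroup (Fin d) ℂ =>
      tsq (U : Matrix (Fin d) (Fin d) ℂ) := by
    refine continuous_matrix fun i j => ?_
    simp only [tsq, Matrix.kroneckerMap_apply]
    exact (continuous_subtype_val.matrix_elem _ _).mul (continuous_subtype_val.matrix_elem _ _)
  exact ((h.matrix_mul continuous_const).matrix_mul h.matrix_conjTranspose).matrix_elem p q

lemma integrable_tsq_conj (μ : Measure (Matrix.unitaryGroup (Fin d) ℂ)) [IsProbabilityMeasure μ]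
    (M : Matrix (Fin d × Fin d) (Fin d × Fin d) ℂ) (p q : Fin d × Fin d) :
    Integrable (fun U : Matrix.unitaryGroup (Fin d) ℂ =>
      (tsq (U : Matrix (Fin d) (Fin d) ℂ) * M * (tsq (U : Matrix (Fin d) (Fin d) ℂ))ᴴ) p q) μ :=
  (continuous_tsq_conj M p q).integrable_of_hasCompactSupport (HasCompactSupport.of_compactSpace _)

/-- The full unitary twirl absorbs a unitary conjugation of its argument: the Haar probability
measure of a compact group is right invariant, by uniqueness. -/
lemma integral_tsq_conj_mul (μ : Measure (Matrix.unitaryGroup (Fin d) ℂ)) [μ.IsHaarMeasure]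
    [IsProbabilityMeasure μ] (M : Matrix (Fin d × Fin d) (Fin d × Fin d) ℂ) (p q : Fin d × Fin d)
    (V : Matrix (Fin d) (Fin d) ℂ) (hV : V ∈ Matrix.unitaryGroup (Fin d) ℂ) :
    ∫ U : Matrix.unitaryGroup (Fin d) ℂ,
        (tsq (U : Matrix (Fin d) (Fin d) ℂ) * (tsq V * M * (tsq V)ᴴ)
          * (tsq (U : Matrix (Fin d) (Fin d) ℂ))ᴴ) p q ∂μ
      = ∫ U : Matrix.unitaryGroup (Fin d) ℂ,
        (tsq (U : Matrix (Fin d) (Fin d) ℂ) * M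
          * (tsq (U : Matrix (Fin d) (Fin d) ℂ))ᴴ) p q ∂μ := by
  let v : Matrix.unitaryGroup (Fin d) ℂ := ⟨V, hV⟩
  have hcont : Continuous fun U : Matrix.unitaryGroup (Fin d) ℂ => U * v := continuous_mul_const v
  have : IsProbabilityMeasure (μ.map (· * v)) :=
    Measure.isProbabilityMeasure_map hcont.measurable.aemeasurable
  have hmap : μ.map (· * v) = μ := Measure.isHaarMeasure_eq_of_isProbabilityMeasure _ _
  conv_rhs => rw [← hmap]
  rw [integral_map hcont.measurable.aemeasurable
    (continuous_tsq_conj M p q).measurable.aestronglyMeasurable]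
  congr 1
  ext U
  simp only [v, Submonoid.coe_mul, tsq_mul, Matrix.conjTranspose_mul, mul_assoc]

end Haar

/-- If `Q` is unitary with `Tr((Q⊗Q) P1 (Q⊗Q)† P1) = 2d/(d+1)`, then the
product set `G^Q · G` of the monomial group `G` (with product weights) is a
unitary 2-design. -/
theorem monomial_conj_product_is_two_design (d : ℕ) (hd : 2 ≤ d)
    (Q : Matrix (Fin d) (Fin d) ℂ) (hQ : Q ∈ Matrix.unitaryGroup (Fin d) ℂ)
    (htr : ((Q ⊗ₖ Q) * P1 d * (Q ⊗ₖ Q)ᴴ * P1 d).trace = (2 * d / (d + 1) : ℂ))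
    (μ : Measure (Matrix.unitaryGroup (Fin d) ℂ))
    [μ.IsHaarMeasure] [IsProbabilityMeasure μ]
    (M : Matrix (Fin d × Fin d) (Fin d × Fin d) ℂ) (p q : Fin d × Fin d) :
    (1 / ((Nat.factorial d : ℂ) * 3 ^ d)) ^ 2 *
      ∑ σ : Equiv.Perm (Fin d), ∑ α : Fin d → ZMod 3,
        ∑ σ' : Equiv.Perm (Fin d), ∑ α' : Fin d → ZMod 3,
          (((Q * gmat σ α * Qᴴ * gmat σ' α') ⊗ₖ (Q * gmat σ α * Qᴴ * gmat σ' α'))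
            * M *
            ((Q * gmat σ α * Qᴴ * gmat σ' α') ⊗ₖ (Q * gmat σ α * Qᴴ * gmat σ' α'))ᴴ) p q
      = ∫ U : Matrix.unitaryGroup (Fin d) ℂ,
          (((U : Matrix (Fin d) (Fin d) ℂ) ⊗ₖ (U : Matrix (Fin d) (Fin d) ℂ))
            * M *
            ((U : Matrix (Fin d) (Fin d) ℂ) ⊗ₖ (U : Matrix (Fin d) (Fin d) ℂ))ᴴ) p q ∂μ := by
  obtain ⟨a, b, hW⟩ := sum_product_span hd Q hQ htr M
  have hQ' : Qᴴ ∈ Matrix.unitaryGroup (Fin d) ℂ := Unitary.star_mem hQ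
  have hcard : (Fintype.card (Equiv.Perm (Fin d) × (Fin d → ZMod 3)) : ℂ)
      = (Nat.factorial d : ℂ) * 3 ^ d := by
    simp [Fintype.card_perm]
  have hne : (Nat.factorial d : ℂ) * 3 ^ d ≠ 0 :=
    mul_ne_zero (by exact_mod_cast Nat.factorial_ne_zero d) (pow_ne_zero d three_ne_zero)
  set n : ℂ := (Nat.factorial d : ℂ) * 3 ^ d with hn
  -- The Haar twirl of the finite sum is computed in two ways: it fixes the sum, which lies in
  -- the span of the identity and the swap, and it sends each summand to the Haar twirl of `M`.
  have key : (a • (1 : Matrix (Fin d × Fin d) (Fin d × Fin d) ℂ) + b • swapMat d) p q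
      = n ^ 2 * ∫ U : Matrix.unitaryGroup (Fin d) ℂ,
        (tsq (U : Matrix (Fin d) (Fin d) ℂ) * M
          * (tsq (U : Matrix (Fin d) (Fin d) ℂ))ᴴ) p q ∂μ := by
    have h1 : ∫ U : Matrix.unitaryGroup (Fin d) ℂ,
        (tsq (U : Matrix (Fin d) (Fin d) ℂ) * (a • 1 + b • swapMat d)
          * (tsq (U : Matrix (Fin d) (Fin d) ℂ))ᴴ) p q ∂μ
        = (a • (1 : Matrix (Fin d × Fin d) (Fin d × Fin d) ℂ) + b • swapMat d) p q := by
      simp only [fun U : Matrix.unitaryGroup (Fin d) ℂ => tsq_conj_one_swap U.2 a b]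
      simp
    rw [← h1, ← hW]
    simp only [Finset.mul_sum, Finset.sum_mul, Matrix.sum_apply]
    rw [integral_finsetSum _ fun x _ => integrable_finsetSum _ fun y _ =>
      integrable_tsq_conj μ _ p q]
    simp only [integral_finsetSum _ fun (y : Equiv.Perm (Fin d) × (Fin d → ZMod 3)) _ =>
      integrable_tsq_conj μ _ p q]
    have h2 := fun x y : Equiv.Perm (Fin d) × (Fin d → ZMod 3) =>
      integral_tsq_conj_mul μ M p q (Q * gmat x.1 x.2 * Qᴴ * gmat y.1 y.2)
        (mul_mem (mul_mem (mul_mem hQ (gmat_mem _ _)) hQ') (gmat_mem _ _))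
    simp only [h2, Finset.sum_const, Finset.card_univ, nsmul_eq_mul, hcard]
    ring
  have hsum : ∑ σ : Equiv.Perm (Fin d), ∑ α : Fin d → ZMod 3,
        ∑ σ' : Equiv.Perm (Fin d), ∑ α' : Fin d → ZMod 3,
          (((Q * gmat σ α * Qᴴ * gmat σ' α') ⊗ₖ (Q * gmat σ α * Qᴴ * gmat σ' α'))
            * M *
            ((Q * gmat σ α * Qᴴ * gmat σ' α') ⊗ₖ (Q * gmat σ α * Qᴴ * gmat σ' α'))ᴴ) p q
      = (a • (1 : Matrix (Fin d × Fin d) (Fin d × Fin d) ℂ) + b • swapMat d) p q := by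
    rw [← hW]
    simp only [Matrix.sum_apply, Fintype.sum_prod_type, tsq]
  rw [hsum, key, ← mul_assoc, ← mul_pow, one_div, inv_mul_cancel₀ hne, one_pow, one_mul]
  rfl
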